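/- For real $\mu\ge 0$ and $z>0$ let $$J_\mu(z)=\sum_{m=0}^\infty \frac{(-1)^m}{m!\,\Gamma(\mu+m+1)}\Bigl(\frac z2\Bigr)^{\mu+2m}$$ be the Bessel function of the first kind. Let $\nu\ge 1$ be real. Let $j_{\nu-1,k}$ and $\lambda^+_{\nu-1,k}$ ($k=1,2,\dots$) denote the $k$-th positive zeroes, in increasing order, of $J_{\nu-1}(z)$ and of $J_{\nu-1}(z)+J_\nu(z)$, respectively, and let $j'_{\nu-1,k}$ denote the $k$-th zero of $J_{\nu-1}'(z)$ in the usual numbering: for $\nu>1$ it is the $k$-th positive zero of $J'_{\nu-1}$, while for $\nu=1$ the zero of $J_0'$ at the origin is counted as the first one, i.e. $j'_{0,1}=0$ and $j'_{0,k+1}$ is the $k$-th positive zero of $J_0'$ for $k\ge1$. Then for every integer $k\ge 1$ $$j_{\nu-1,k+1}<\lambda^+_{\nu-1,k+1}<j'_{\nu-1,k+2}<j_{\nu-1,k+2}.$$ -/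

import Mathlib

/-- Bessel function of the first kind of real order `ν`, defined by its power series
`J_ν(z) = ∑ₘ (−1)^m / (m! Γ(ν+m+1)) (z/2)^(ν+2m)` (with real-exponent powers). -/
noncomputable def besselJ (ν z : ℝ) : ℝ :=
  ∑' m : ℕ, ((-1 : ℝ) ^ m / (Nat.factorial m * Real.Gamma (ν + m + 1))) *
    (z / 2) ^ (ν + 2 * (m : ℝ))

/-- `x` (indexed by `k ≥ 1`; the value `x 0` is irrelevant) enumerates the positive zeroes
of `f`: it is strictly increasing on indices `k ≥ 1`, each `x k` is a positive zero of `f`,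
and every positive zero of `f` is some `x k`. -/
def EnumPosZeros (f : ℝ → ℝ) (x : ℕ → ℝ) : Prop :=
  StrictMonoOn x (Set.Ici 1) ∧ (∀ k, 1 ≤ k → 0 < x k ∧ f (x k) = 0) ∧
    ∀ z : ℝ, 0 < z → f z = 0 → ∃ k, 1 ≤ k ∧ x k = z

/-- `x` (indexed by `k ≥ 1`) is the sequence `j'_{μ,k}` of zeroes of `J_μ'`, for `μ ≥ 0`, with
the usual numbering: for `μ ≠ 0` these are the positive zeroes of `J_μ'`; for `μ = 0` the
zero of `J_0'` at the origin is counted as the first one, `j'_{0,1} = 0`, and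
`j'_{0,2}, j'_{0,3}, …` are the positive zeroes of `J_0'`. -/
def EnumBesselDerivZeros (μ : ℝ) (x : ℕ → ℝ) : Prop :=
  (μ ≠ 0 → EnumPosZeros (deriv (besselJ μ)) x) ∧
    (μ = 0 → x 1 = 0 ∧ EnumPosZeros (deriv (besselJ μ)) (fun k => x (k + 1)))

open Filter Topology Set

/-- Coefficients of the entire function `besselE μ`. -/
noncomputable def besselCoeff (μ : ℝ) (m : ℕ) : ℝ :=
  (-1 : ℝ) ^ m / (Nat.factorial m * Real.Gamma (μ + m + 1))

/-- The entire function with `J_μ(z) = (z/2)^μ * besselE μ ((z/2)^2)`. -/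
noncomputable def besselE (μ t : ℝ) : ℝ := ∑' m : ℕ, besselCoeff μ m * t ^ m

lemma gamma_le_gamma_add_nat {μ : ℝ} (hμ : 0 ≤ μ) (m : ℕ) :
    Real.Gamma (μ + 1) ≤ Real.Gamma (μ + m + 1) := by
  induction m with
  | zero => simp
  | succ n ih =>
    have h : Real.Gamma (μ + (n + 1 : ℕ) + 1) = (μ + n + 1) * Real.Gamma (μ + n + 1) := by
      rw [← Real.Gamma_add_one (by positivity)]
      push_cast
      ring_nf
    have hpos : 0 < Real.Gamma (μ + n + 1) := Real.Gamma_pos_of_pos (by positivity)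
    have : (1 : ℝ) ≤ μ + n + 1 := by
      have : (0 : ℝ) ≤ n := by positivity
      linarith
    rw [h]
    nlinarith

lemma abs_besselCoeff_le {μ : ℝ} (hμ : 0 ≤ μ) (m : ℕ) :
    |besselCoeff μ m| ≤ (Real.Gamma (μ + 1))⁻¹ * (1 / Nat.factorial m) := by
  have h0 : 0 < Real.Gamma (μ + 1) := Real.Gamma_pos_of_pos (by positivity)
  have h1 := gamma_le_gamma_add_nat hμ m
  have h2 : 0 < Real.Gamma (μ + m + 1) := h0.trans_le h1
  have h3 : (0 : ℝ) < Nat.factorial m := by positivity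
  rw [besselCoeff, abs_div, abs_pow, abs_neg, abs_one, one_pow, abs_of_pos (by positivity),
    one_div, mul_inv, mul_comm, one_div]
  gcongr

lemma summable_besselCoeff_mul_pow {μ : ℝ} (hμ : 0 ≤ μ) (t : ℝ) :
    Summable fun m : ℕ => besselCoeff μ m * t ^ m := by
  refine Summable.of_norm_bounded
    (g := fun m : ℕ => (Real.Gamma (μ + 1))⁻¹ * (|t| ^ m / Nat.factorial m))
    ((Real.summable_pow_div_factorial |t|).mul_left _) fun m => ?_
  rw [Real.norm_eq_abs, abs_mul, abs_pow]
  calc _ ≤ (Real.Gamma (μ + 1))⁻¹ * (1 / Nat.factorial m) * |t| ^ m := by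
        gcongr; exact abs_besselCoeff_le hμ m
    _ = _ := by ring

lemma besselCoeff_succ_mul (μ : ℝ) (m : ℕ) :
    besselCoeff μ (m + 1) * ((m + 1 : ℕ) : ℝ) = -besselCoeff (μ + 1) m := by
  have h3 : (Nat.factorial m : ℝ) ≠ 0 := by positivity
  have h4 : ((m : ℝ) + 1) ≠ 0 := by positivity
  have h5 : μ + ((m + 1 : ℕ) : ℝ) + 1 = μ + 1 + m + 1 := by push_cast; ring
  rw [besselCoeff, besselCoeff, h5, Nat.factorial_succ]
  push_cast
  rw [pow_succ]
  field_simp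

lemma besselCoeff_order_succ {μ : ℝ} (hμ : 0 ≤ μ) (m : ℕ) :
    besselCoeff (μ + 1) m * (μ + m + 1) = besselCoeff μ m := by
  have h4 : μ + (m : ℝ) + 1 ≠ 0 := by positivity
  have h5 : μ + 1 + (m : ℝ) + 1 = μ + m + 1 + 1 := by ring
  have h0 : Real.Gamma (μ + m + 1) ≠ 0 := (Real.Gamma_pos_of_pos (by positivity)).ne'
  rw [besselCoeff, besselCoeff, h5, Real.Gamma_add_one h4]
  field_simp

lemma hasDerivAt_besselE {μ : ℝ} (hμ : 0 ≤ μ) (t : ℝ) :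
    HasDerivAt (besselE μ) (-besselE (μ + 1) t) t := by
  set R : ℝ := |t| + 1
  have hR : 0 ≤ R := by positivity
  let u : ℕ → ℝ := fun m => |besselCoeff μ m| * (m * R ^ (m - 1))
  have hu : Summable u := by
    rw [← summable_nat_add_iff 1]
    have h := (summable_besselCoeff_mul_pow (μ := μ + 1) (by positivity) R).abs
    refine h.congr fun m => ?_
    simp only [u, Nat.add_sub_cancel]
    rw [abs_mul, abs_of_nonneg (pow_nonneg hR m), ← abs_neg (besselCoeff (μ + 1) m),
      ← besselCoeff_succ_mul, abs_mul, Nat.abs_cast, mul_assoc]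
  have key : HasDerivAt (fun z => ∑' m : ℕ, besselCoeff μ m * z ^ m)
      (∑' m : ℕ, besselCoeff μ m * (m * t ^ (m - 1))) t := by
    refine hasDerivAt_tsum_of_isPreconnected (t := Metric.ball 0 R) (y₀ := 0) hu
      Metric.isOpen_ball (convex_ball (0 : ℝ) R).isPreconnected
      (fun m y _ => (hasDerivAt_pow m y).const_mul _) (fun m y hy => ?_) ?_
      (summable_besselCoeff_mul_pow hμ 0) ?_
    · rw [Real.norm_eq_abs, abs_mul, abs_mul, abs_pow, Nat.abs_cast]
      have hy' : |y| ≤ R := by simpa using (Metric.mem_ball.1 hy).le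
      simp only [u]
      gcongr
    · simp [R]; positivity
    · simp [R]
  refine key.congr_deriv ?_
  rw [Summable.tsum_eq_zero_add]
  · simp only [Nat.cast_zero, zero_mul, mul_zero, zero_add, Nat.add_sub_cancel]
    rw [besselE, ← tsum_neg]
    refine tsum_congr fun m => ?_
    rw [← mul_assoc, besselCoeff_succ_mul, neg_mul]
  · rw [← summable_nat_add_iff 1]
    refine (summable_besselCoeff_mul_pow (μ := μ + 1) (by positivity) t).neg.congr fun m => ?_
    simp only [Nat.add_sub_cancel]
    rw [← mul_assoc, besselCoeff_succ_mul, neg_mul]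

lemma besselE_recurrence {μ : ℝ} (hμ : 0 ≤ μ) (t : ℝ) :
    besselE μ t = (μ + 1) * besselE (μ + 1) t - t * besselE (μ + 2) t := by
  have h1 := summable_besselCoeff_mul_pow (μ := μ + 1) (by positivity) t
  have h2 := summable_besselCoeff_mul_pow (μ := μ + 2) (by positivity) t
  have h0 := summable_besselCoeff_mul_pow hμ t
  have h3 : ∀ m : ℕ, besselCoeff μ (m + 1) * t ^ (m + 1) =
      (μ + 1) * (besselCoeff (μ + 1) (m + 1) * t ^ (m + 1)) -
        t * (besselCoeff (μ + 2) m * t ^ m) := by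
    intro m
    have a := besselCoeff_order_succ hμ (m + 1)
    have b := besselCoeff_succ_mul (μ + 1) m
    rw [show μ + 1 + 1 = μ + 2 by ring] at b
    push_cast at a b
    rw [← a, ← neg_eq_iff_eq_neg.2 b]
    ring
  have a0 := besselCoeff_order_succ hμ 0
  rw [besselE, besselE, besselE, h0.tsum_eq_zero_add, h1.tsum_eq_zero_add, tsum_congr h3,
    Summable.tsum_sub (((summable_nat_add_iff 1).2 h1).mul_left _) (h2.mul_left _),
    tsum_mul_left, tsum_mul_left, ← a0]
  push_cast
  ring

lemma besselE_zero_pos {μ : ℝ} (hμ : 0 ≤ μ) : 0 < besselE μ 0 := by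
  have h0 : 0 < Real.Gamma (μ + 1) := Real.Gamma_pos_of_pos (by positivity)
  rw [besselE, tsum_eq_single 0 (fun m hm => by simp [hm])]
  simp [besselCoeff, h0]

lemma besselJ_eq (μ : ℝ) {z : ℝ} (hz : 0 < z) :
    besselJ μ z = (z / 2) ^ μ * besselE μ ((z / 2) ^ 2) := by
  rw [besselJ, besselE, ← tsum_mul_left]
  refine tsum_congr fun m => ?_
  rw [Real.rpow_add (by positivity), show (2 : ℝ) * (m : ℝ) = ((2 * m : ℕ) : ℝ) by push_cast; ring,
    Real.rpow_natCast, pow_mul, besselCoeff]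
  ring

lemma hasDerivAt_besselJ {μ : ℝ} (hμ : 0 ≤ μ) {z : ℝ} (hz : 0 < z) :
    HasDerivAt (besselJ μ) (μ / z * besselJ μ z - besselJ (μ + 1) z) z := by
  have h1 : HasDerivAt (fun y : ℝ => y / 2) (1 / 2) z := (hasDerivAt_id z).div_const 2
  have hz2 : 0 < z / 2 := by positivity
  have h2 := h1.rpow_const (p := μ) (Or.inl hz2.ne')
  have h3 := (hasDerivAt_besselE hμ ((z / 2) ^ 2)).comp z (h1.pow 2)
  have h4 := h2.mul h3
  have h5 : HasDerivAt (besselJ μ) _ z := h4.congr_of_eventuallyEq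
    ((lt_mem_nhds hz).mono fun y hy => besselJ_eq μ hy)
  convert h5 using 1
  rw [besselJ_eq μ hz, besselJ_eq (μ + 1) hz, Real.rpow_add_one hz2.ne', Real.rpow_sub_one hz2.ne']
  simp only [Function.comp, Pi.pow_apply]
  field_simp
  push_cast
  ring

lemma besselJ_recurrence {μ : ℝ} (hμ : 0 ≤ μ) {z : ℝ} (hz : 0 < z) :
    besselJ μ z + besselJ (μ + 2) z = 2 * (μ + 1) / z * besselJ (μ + 1) z := by
  have hz2 : 0 < z / 2 := by positivity
  rw [besselJ_eq μ hz, besselJ_eq (μ + 1) hz, besselJ_eq (μ + 2) hz, besselE_recurrence hμ,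
    Real.rpow_add_one hz2.ne', show μ + 2 = μ + 1 + 1 by ring, Real.rpow_add_one hz2.ne',
    Real.rpow_add_one hz2.ne']
  field_simp
  ring

lemma hasDerivAt_besselJ_succ {μ : ℝ} (hμ : 0 ≤ μ) {z : ℝ} (hz : 0 < z) :
    HasDerivAt (besselJ (μ + 1)) (besselJ μ z - (μ + 1) / z * besselJ (μ + 1) z) z := by
  convert hasDerivAt_besselJ (μ := μ + 1) (by positivity) hz using 1
  have := besselJ_recurrence hμ hz
  rw [show μ + 1 + 1 = μ + 2 by ring]
  linear_combination this

lemma deriv_besselJ {μ : ℝ} (hμ : 0 ≤ μ) {z : ℝ} (hz : 0 < z) :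
    deriv (besselJ μ) z = μ / z * besselJ μ z - besselJ (μ + 1) z :=
  (hasDerivAt_besselJ hμ hz).deriv

lemma hasDerivAt_deriv_besselJ {μ : ℝ} (hμ : 0 ≤ μ) {z : ℝ} (hz : 0 < z) :
    HasDerivAt (deriv (besselJ μ))
      (-(1 - μ ^ 2 / z ^ 2) * besselJ μ z - deriv (besselJ μ) z / z) z := by
  have h1 : HasDerivAt (fun y : ℝ => μ / y) (-μ / z ^ 2) z := by
    simpa [div_eq_mul_inv, mul_comm] using (hasDerivAt_inv hz.ne').const_mul μ
  have h2 := (h1.fun_mul (hasDerivAt_besselJ hμ hz)).fun_sub (hasDerivAt_besselJ_succ hμ hz)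
  have h3 := h2.congr_of_eventuallyEq (f₁ := deriv (besselJ μ))
    ((lt_mem_nhds hz).mono fun y hy => deriv_besselJ hμ hy)
  refine h3.congr_deriv ?_
  rw [deriv_besselJ hμ hz]
  field_simp
  ring

lemma continuous_besselE {μ : ℝ} (hμ : 0 ≤ μ) : Continuous (besselE μ) :=
  continuous_iff_continuousAt.2 fun t => (hasDerivAt_besselE hμ t).continuousAt

lemma eventually_besselJ_pos {μ : ℝ} (hμ : 0 ≤ μ) : ∀ᶠ z in 𝓝[>] (0 : ℝ), 0 < besselJ μ z := by
  have hc : Continuous fun z : ℝ => besselE μ ((z / 2) ^ 2) :=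
    (continuous_besselE hμ).comp (by fun_prop)
  have h : ∀ᶠ z in 𝓝 (0 : ℝ), 0 < besselE μ ((z / 2) ^ 2) :=
    hc.continuousAt.eventually_const_lt (by simpa using besselE_zero_pos hμ)
  filter_upwards [nhdsWithin_le_nhds h, self_mem_nhdsWithin] with z hz hz0
  have hz0 : 0 < z := hz0
  rw [besselJ_eq μ hz0]
  positivity

lemma eventually_deriv_besselJ_pos {μ : ℝ} (hμ : 0 < μ) :
    ∀ᶠ z in 𝓝[>] (0 : ℝ), 0 < deriv (besselJ μ) z := by
  have hc : Continuous fun z : ℝ =>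
      μ * besselE μ ((z / 2) ^ 2) - z ^ 2 / 2 * besselE (μ + 1) ((z / 2) ^ 2) :=
    (continuous_const.mul ((continuous_besselE hμ.le).comp (by fun_prop))).sub
      ((by fun_prop : Continuous fun z : ℝ => z ^ 2 / 2).mul
        ((continuous_besselE (by positivity)).comp (by fun_prop)))
  have h := (hc.tendsto 0).eventually_const_lt (u := 0)
    (by simpa using mul_pos hμ (besselE_zero_pos hμ.le))
  filter_upwards [nhdsWithin_le_nhds h, self_mem_nhdsWithin] with z hz hz0
  have hz0 : 0 < z := hz0
  have hz2 : 0 < z / 2 := by positivity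
  rw [deriv_besselJ hμ.le hz0, besselJ_eq μ hz0, besselJ_eq (μ + 1) hz0,
    Real.rpow_add_one hz2.ne']
  have : μ / z * ((z / 2) ^ μ * besselE μ ((z / 2) ^ 2)) -
      (z / 2) ^ μ * (z / 2) * besselE (μ + 1) ((z / 2) ^ 2) = (z / 2) ^ μ / z *
      (μ * besselE μ ((z / 2) ^ 2) - z ^ 2 / 2 * besselE (μ + 1) ((z / 2) ^ 2)) := by
    field_simp
  rw [this]
  positivity

lemma deriv_nonneg_of_nonneg_right {F : ℝ → ℝ} {d a b : ℝ} (hab : a < b) (hF : HasDerivAt F d a)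
    (ha : F a = 0) (h : ∀ z ∈ Ioo a b, 0 ≤ F z) : 0 ≤ d := by
  have h1 := (hasDerivWithinAt_iff_tendsto_slope' (s := Ioi a) (by simp)).1 hF.hasDerivWithinAt
  refine ge_of_tendsto h1 ?_
  filter_upwards [Ioo_mem_nhdsGT hab] with z hz
  rw [slope_def_field, ha, sub_zero]
  exact div_nonneg (h z hz) (sub_nonneg.2 hz.1.le)

lemma deriv_nonpos_of_nonneg_left {F : ℝ → ℝ} {d a b : ℝ} (hab : a < b) (hF : HasDerivAt F d b)
    (hb : F b = 0) (h : ∀ z ∈ Ioo a b, 0 ≤ F z) : d ≤ 0 := by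
  have h1 := (hasDerivWithinAt_iff_tendsto_slope' (s := Iio b) (by simp)).1 hF.hasDerivWithinAt
  refine le_of_tendsto h1 ?_
  filter_upwards [Ioo_mem_nhdsLT hab] with z hz
  rw [slope_def_field, hb, sub_zero]
  exact div_nonpos_of_nonneg_of_nonpos (h z hz) (sub_nonpos.2 hz.2.le)

/-- A function whose derivative is positive at each of its zeros stays positive once it is
nonnegative. -/
lemma pos_of_deriv_pos_at_zeros {F F' : ℝ → ℝ} {a b : ℝ} (hab : a < b)
    (hF : ∀ z ∈ Icc a b, HasDerivAt F (F' z) z) (ha : 0 ≤ F a)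
    (hz : ∀ z ∈ Icc a b, F z = 0 → 0 < F' z) : 0 < F b := by
  have hnn : ∀ z ∈ Icc a b, 0 ≤ F z := by
    intro z hzm
    have := image_le_of_deriv_right_lt_deriv_boundary' (f := fun _ => (0 : ℝ)) (f' := fun _ => 0)
      (a := a) (b := b) (B := F) (B' := F') continuousOn_const
      (fun x _ => hasDerivWithinAt_const ..) ha
      (fun x hx => (hF x hx).continuousAt.continuousWithinAt)
      (fun x hx => (hF x (Ico_subset_Icc_self hx)).hasDerivWithinAt)
      (fun x hx h0 => hz x (Ico_subset_Icc_self hx) h0.symm)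
    exact this hzm
  have hb : b ∈ Icc a b := right_mem_Icc.2 hab.le
  refine (hnn b hb).lt_of_ne fun h0 => ?_
  exact (hz b hb h0.symm).not_ge (deriv_nonpos_of_nonneg_left hab (hF b hb) h0.symm
    fun z hz => hnn z (Ioo_subset_Icc_self hz))

lemma exists_unique_zero_of_deriv_pos_at_zeros {F F' : ℝ → ℝ} {a b : ℝ} (hab : a < b)
    (hF : ∀ z ∈ Icc a b, HasDerivAt F (F' z) z) (ha : F a < 0) (hb : 0 < F b)
    (hz : ∀ z ∈ Ioo a b, F z = 0 → 0 < F' z) :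
    ∃ c ∈ Ioo a b, F c = 0 ∧ (∀ z ∈ Icc a b, F z = 0 → z = c) ∧
      ∀ z ∈ Icc a b, 0 < F z → c < z := by
  have hz' : ∀ z ∈ Icc a b, F z = 0 → 0 < F' z := by
    intro z hzm h0
    refine hz z ⟨hzm.1.lt_of_ne ?_, hzm.2.lt_of_ne ?_⟩ h0
    · rintro rfl; exact ha.ne h0
    · rintro rfl; exact hb.ne' h0
  have mono : ∀ x ∈ Icc a b, ∀ y ∈ Icc a b, x < y → 0 ≤ F x → 0 < F y := fun x hx y hy hxy h0 =>
    pos_of_deriv_pos_at_zeros hxy (fun z h => hF z ⟨hx.1.trans h.1, h.2.trans hy.2⟩) h0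
      fun z h => hz' z ⟨hx.1.trans h.1, h.2.trans hy.2⟩
  obtain ⟨c, hc, hc0⟩ := intermediate_value_Ioo hab.le
    (fun z h => (hF z h).continuousAt.continuousWithinAt) ⟨ha, hb⟩
  have hcm := Ioo_subset_Icc_self hc
  refine ⟨c, hc, hc0, fun z hzm h0 => ?_, fun z hzm h0 => ?_⟩
  · rcases lt_trichotomy z c with h | h | h
    · exact absurd hc0 (mono z hzm c hcm h h0.ge).ne'
    · exact h
    · exact absurd h0 (mono c hcm z hzm h hc0.ge).ne'
  · rcases lt_trichotomy c z with h | h | h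
    · exact h
    · exact absurd hc0 (h ▸ h0.ne')
    · exact absurd hc0 (mono z hzm c hcm h h0.le).ne'

lemma exists_sign_mul_pos {f : ℝ → ℝ} {p q : ℝ} (hf : ContinuousOn f (Ioo p q))
    (h0 : ∀ z ∈ Ioo p q, f z ≠ 0) :
    ∃ s : ℝ, s ≠ 0 ∧ ∀ z ∈ Ioo p q, 0 < s * f z := by
  by_cases h : ∃ x ∈ Ioo p q, 0 < f x
  · obtain ⟨x, hx, hx0⟩ := h
    refine ⟨1, one_ne_zero, fun z hz => ?_⟩
    by_contra hc
    rw [one_mul, not_lt] at hc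
    obtain ⟨y, hy, hy0⟩ := isPreconnected_Ioo.intermediate_value hz hx hf ⟨hc, hx0.le⟩
    exact h0 y hy hy0
  · push Not at h
    refine ⟨-1, by norm_num, fun z hz => ?_⟩
    have := (h z hz).lt_of_ne (h0 z hz)
    linarith

section Bessel

variable {μ : ℝ}

/-- `J_μ` and `J_{μ+1}` have no common positive zero. -/
lemma besselJ_sq_add_sq_pos (hμ : 0 ≤ μ) {z : ℝ} (hz : 0 < z) :
    0 < besselJ μ z ^ 2 + besselJ (μ + 1) z ^ 2 := by
  obtain ⟨y, hy0, hyz⟩ := ((eventually_besselJ_pos hμ).and (Ioo_mem_nhdsGT hz)).exists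
  let H : ℝ → ℝ := fun x => x ^ (2 * μ + 2) * (besselJ μ x ^ 2 + besselJ (μ + 1) x ^ 2)
  have hH : ∀ x : ℝ, 0 < x →
      HasDerivAt H (x ^ (2 * μ + 1) * ((4 * μ + 2) * besselJ μ x ^ 2)) x := by
    intro x hx
    have h := (Real.hasDerivAt_rpow_const (x := x) (p := 2 * μ + 2) (Or.inl hx.ne')).fun_mul
      (((hasDerivAt_besselJ hμ hx).fun_pow 2).fun_add
        ((hasDerivAt_besselJ_succ hμ hx).fun_pow 2))
    refine h.congr_deriv ?_
    have hr : x ^ (2 * μ + 2) = x ^ (2 * μ + 1) * x := by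
      rw [← Real.rpow_add_one hx.ne']
      ring_nf
    rw [show 2 * μ + 2 - 1 = 2 * μ + 1 by ring, hr]
    generalize x ^ (2 * μ + 1) = w
    field_simp
    push_cast
    ring
  have hm : MonotoneOn H (Icc y z) := by
    refine monotoneOn_of_hasDerivWithinAt_nonneg (convex_Icc y z)
      (f' := fun x => x ^ (2 * μ + 1) * ((4 * μ + 2) * besselJ μ x ^ 2))
      (fun x hx => (hH x (hyz.1.trans_le hx.1)).continuousAt.continuousWithinAt)
      (fun x hx => ?_) (fun x hx => ?_)
    · rw [interior_Icc] at hx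
      exact (hH x (hyz.1.trans hx.1)).hasDerivWithinAt
    · rw [interior_Icc] at hx
      have : 0 < x := hyz.1.trans hx.1
      positivity
  have h1 := hm (left_mem_Icc.2 hyz.2.le) (right_mem_Icc.2 hyz.2.le) hyz.2.le
  have hy : 0 < y := hyz.1
  have h2 : 0 < H y := by simp only [H]; positivity
  exact pos_of_mul_pos_right (h2.trans_le h1) (by positivity)

lemma besselJ_succ_ne_zero (hμ : 0 ≤ μ) {z : ℝ} (hz : 0 < z) (h0 : besselJ μ z = 0) :
    besselJ (μ + 1) z ≠ 0 := fun h => by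
  have := besselJ_sq_add_sq_pos hμ hz
  simp [h0, h] at this

lemma hasDerivAt_besselJ_add (hμ : 0 ≤ μ) {z : ℝ} (hz : 0 < z) :
    HasDerivAt (fun z => besselJ μ z + besselJ (μ + 1) z)
      ((2 + (2 * μ + 1) / z) * besselJ μ z -
        (1 + (μ + 1) / z) * (besselJ μ z + besselJ (μ + 1) z)) z :=
  ((hasDerivAt_besselJ hμ hz).fun_add (hasDerivAt_besselJ_succ hμ hz)).congr_deriv (by ring)

lemma continuousOn_besselJ (hμ : 0 ≤ μ) : ContinuousOn (besselJ μ) (Ioi 0) :=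
  fun _ hz => (hasDerivAt_besselJ hμ hz).continuousAt.continuousWithinAt

/-- Between consecutive zeros of `J_μ` there is exactly one zero of `J_μ + J_{μ+1}`, followed by
exactly one zero of `J_μ'`. -/
lemma exists_zeros_between (hμ : 0 ≤ μ) {p q : ℝ} (hp : 0 < p) (hpq : p < q) (hμp : μ ≤ p)
    (hp0 : besselJ μ p = 0) (hq0 : besselJ μ q = 0) (hne : ∀ z ∈ Ioo p q, besselJ μ z ≠ 0) :
    ∃ c d, p < c ∧ c < d ∧ d < q ∧ besselJ μ c + besselJ (μ + 1) c = 0 ∧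
      deriv (besselJ μ) d = 0 ∧
      (∀ z ∈ Icc p q, besselJ μ z + besselJ (μ + 1) z = 0 → z = c) ∧
      ∀ z ∈ Icc p q, deriv (besselJ μ) z = 0 → z = d := by
  have pos : ∀ z ∈ Icc p q, 0 < z := fun z hz => hp.trans_le hz.1
  have hq := hp.trans hpq
  obtain ⟨s, hs, hsf⟩ := exists_sign_mul_pos
    ((continuousOn_besselJ hμ).mono fun z (hz : z ∈ Ioo p q) => hp.trans hz.1) hne
  have hsp : s * besselJ (μ + 1) p < 0 := by
    have h := deriv_nonneg_of_nonneg_right hpq ((hasDerivAt_besselJ hμ hp).const_mul s)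
      (by simp [hp0]) (fun z hz => (hsf z hz).le)
    have h' := mul_ne_zero hs (besselJ_succ_ne_zero hμ hp hp0)
    rw [hp0] at h
    exact lt_of_le_of_ne (by linarith) h'
  have hsq : 0 < s * besselJ (μ + 1) q := by
    have h := deriv_nonpos_of_nonneg_left hpq ((hasDerivAt_besselJ hμ hq).const_mul s)
      (by simp [hq0]) (fun z hz => (hsf z hz).le)
    have h' := mul_ne_zero hs (besselJ_succ_ne_zero hμ hq hq0)
    rw [hq0] at h
    exact lt_of_le_of_ne (by linarith) h'.symm
  obtain ⟨c, hc, hc0, hcu, hclt⟩ := exists_unique_zero_of_deriv_pos_at_zeros hpq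
    (fun z hz => (hasDerivAt_besselJ_add hμ (pos z hz)).const_mul s)
    (by simpa [hp0] using hsp) (by simpa [hq0] using hsq) (fun z hz h0 => by
      have hz0 := hp.trans hz.1
      rw [(mul_eq_zero.1 h0).resolve_left hs]
      have := hsf z hz
      calc 0 < (2 + (2 * μ + 1) / z) * (s * besselJ μ z) := by positivity
        _ = _ := by ring)
  obtain ⟨d, hd, hd0, hdu, -⟩ := exists_unique_zero_of_deriv_pos_at_zeros
    (F := fun z => -s * deriv (besselJ μ) z) hpq
    (fun z hz => (hasDerivAt_deriv_besselJ hμ (pos z hz)).const_mul (-s))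
    (by simpa [deriv_besselJ hμ hp, hp0] using hsp)
    (by simpa [deriv_besselJ hμ hq, hq0] using hsq) (fun z hz h0 => by
      have hz0 := hp.trans hz.1
      rw [(mul_eq_zero.1 h0).resolve_left (neg_ne_zero.2 hs)]
      have := hsf z hz
      have h1 : 0 < 1 - μ ^ 2 / z ^ 2 := by
        rw [sub_pos, div_lt_one (by positivity)]
        exact pow_lt_pow_left₀ (hμp.trans_lt hz.1) hμ two_ne_zero
      calc 0 < (1 - μ ^ 2 / z ^ 2) * (s * besselJ μ z) := by positivity
        _ = _ := by ring)
  have hd0' := (mul_eq_zero.1 hd0).resolve_left (neg_ne_zero.2 hs)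
  refine ⟨c, d, hc.1, hclt d (Ioo_subset_Icc_self hd) ?_, hd.2,
    (mul_eq_zero.1 hc0).resolve_left hs, hd0', fun z hz h0 => hcu z hz (by simp [h0]),
    fun z hz h0 => hdu z hz (by simp [h0])⟩
  have hdz := hp.trans hd.1
  rw [deriv_besselJ hμ hdz] at hd0'
  have := hsf d hd
  calc 0 < (1 + μ / d) * (s * besselJ μ d) := by positivity
    _ = _ := by linear_combination s * hd0'

lemma besselJ_pos_of_ne_zero (hμ : 0 ≤ μ) {q : ℝ} (hne : ∀ z ∈ Ioo 0 q, besselJ μ z ≠ 0) :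
    ∀ z ∈ Ioo 0 q, 0 < besselJ μ z := by
  intro z hz
  obtain ⟨s, hs, hsf⟩ := exists_sign_mul_pos
    ((continuousOn_besselJ hμ).mono fun z (hz : z ∈ Ioo 0 q) => hz.1) hne
  obtain ⟨y, hy0, hyz⟩ := ((eventually_besselJ_pos hμ).and (Ioo_mem_nhdsGT hz.1)).exists
  have hspos : 0 < s := pos_of_mul_pos_left (hsf y ⟨hyz.1, hyz.2.trans hz.2⟩) hy0.le
  exact pos_of_mul_pos_right (hsf z hz) hspos.le

lemma deriv_besselJ_pos_of_le (hμ : 0 < μ) {z : ℝ} (hz : 0 < z) (hzμ : z ≤ μ)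
    (hpos : ∀ y ∈ Ioo 0 z, 0 < besselJ μ y) : 0 < deriv (besselJ μ) z := by
  obtain ⟨y, hy0, hyz⟩ := ((eventually_deriv_besselJ_pos hμ).and (Ioo_mem_nhdsGT hz)).exists
  have hw : ∀ x : ℝ, 0 < x → HasDerivAt (fun x => x * deriv (besselJ μ) x)
      ((μ ^ 2 / x ^ 2 - 1) * x * besselJ μ x) x := by
    intro x hx
    refine ((hasDerivAt_id x).fun_mul (hasDerivAt_deriv_besselJ hμ.le hx)).congr_deriv ?_
    simp only [id]
    field_simp
    ring
  have hm : MonotoneOn (fun x => x * deriv (besselJ μ) x) (Icc y z) := by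
    refine monotoneOn_of_hasDerivWithinAt_nonneg (convex_Icc y z)
      (f' := fun x => (μ ^ 2 / x ^ 2 - 1) * x * besselJ μ x)
      (fun x hx => (hw x (hyz.1.trans_le hx.1)).continuousAt.continuousWithinAt)
      (fun x hx => ?_) (fun x hx => ?_)
    · rw [interior_Icc] at hx
      exact (hw x (hyz.1.trans hx.1)).hasDerivWithinAt
    · rw [interior_Icc] at hx
      have hx0 : 0 < x := hyz.1.trans hx.1
      have h1 : 0 ≤ μ ^ 2 / x ^ 2 - 1 := by
        rw [sub_nonneg, one_le_div (by positivity)]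
        exact pow_le_pow_left₀ hx0.le (hx.2.le.trans hzμ) 2
      have := hpos x ⟨hx0, hx.2⟩
      positivity
  have h1 := hm (left_mem_Icc.2 hyz.2.le) (right_mem_Icc.2 hyz.2.le) hyz.2.le
  exact pos_of_mul_pos_right ((mul_pos hyz.1 hy0).trans_le h1) hz.le

lemma deriv_besselJ_neg_at_first_zero (hμ : 0 ≤ μ) {q : ℝ} (hq : 0 < q) (hq0 : besselJ μ q = 0)
    (hne : ∀ z ∈ Ioo 0 q, besselJ μ z ≠ 0) : deriv (besselJ μ) q < 0 := by
  have h := deriv_nonpos_of_nonneg_left hq (hasDerivAt_besselJ hμ hq) hq0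
    fun z hz => (besselJ_pos_of_ne_zero hμ hne z hz).le
  rw [deriv_besselJ hμ hq]
  refine h.lt_of_ne ?_
  simpa [hq0] using besselJ_succ_ne_zero hμ hq hq0

lemma lt_first_zero (hμ : 0 ≤ μ) {q : ℝ} (hq : 0 < q) (hq0 : besselJ μ q = 0)
    (hne : ∀ z ∈ Ioo 0 q, besselJ μ z ≠ 0) : μ < q := by
  by_contra h
  rw [not_lt] at h
  exact (deriv_besselJ_pos_of_le (hq.trans_le h) hq h (besselJ_pos_of_ne_zero hμ hne)).not_gt
    (deriv_besselJ_neg_at_first_zero hμ hq hq0 hne)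

lemma besselJ_add_pos (hμ : 0 ≤ μ) {q : ℝ} (hne : ∀ z ∈ Ioo 0 q, besselJ μ z ≠ 0) :
    ∀ z ∈ Ioo 0 q, 0 < besselJ μ z + besselJ (μ + 1) z := by
  intro z hz
  obtain ⟨y, ⟨hy0, hy1⟩, hyz⟩ := (((eventually_besselJ_pos hμ).and
    (eventually_besselJ_pos (by positivity : 0 ≤ μ + 1))).and (Ioo_mem_nhdsGT hz.1)).exists
  refine pos_of_deriv_pos_at_zeros (F := fun z => besselJ μ z + besselJ (μ + 1) z) hyz.2
    (fun x hx => hasDerivAt_besselJ_add hμ (hyz.1.trans_le hx.1)) (by positivity)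
    fun x hx h0 => ?_
  have hx0 := hyz.1.trans_le hx.1
  have := besselJ_pos_of_ne_zero hμ hne x ⟨hx0, hx.2.trans_lt hz.2⟩
  rw [h0, mul_zero, sub_zero]
  positivity

lemma deriv_besselJ_zero_neg {q : ℝ} (hne : ∀ z ∈ Ioo 0 q, besselJ 0 z ≠ 0) :
    ∀ z ∈ Ioo 0 q, deriv (besselJ 0) z < 0 := by
  intro z hz
  obtain ⟨y, hy1, hyz⟩ := ((eventually_besselJ_pos (zero_le_one (α := ℝ))).and
    (Ioo_mem_nhdsGT hz.1)).exists
  have h := pos_of_deriv_pos_at_zeros (F := besselJ 1) hyz.2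
    (fun x hx => by
      simpa using hasDerivAt_besselJ_succ le_rfl (hyz.1.trans_le hx.1)) hy1.le
    fun x hx h0 => by
      have := besselJ_pos_of_ne_zero le_rfl hne x ⟨hyz.1.trans_le hx.1, hx.2.trans_lt hz.2⟩
      simpa [h0] using this
  rw [deriv_besselJ le_rfl hz.1]
  simpa using h

lemma exists_deriv_zero_before (hμ : 0 < μ) {q : ℝ} (hq : 0 < q) (hq0 : besselJ μ q = 0)
    (hne : ∀ z ∈ Ioo 0 q, besselJ μ z ≠ 0) :
    ∃ d ∈ Ioo 0 q, deriv (besselJ μ) d = 0 ∧ ∀ z ∈ Ioo 0 q, deriv (besselJ μ) z = 0 → z = d := by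
  have hpos := besselJ_pos_of_ne_zero hμ.le hne
  have hneg := deriv_besselJ_neg_at_first_zero hμ.le hq hq0 hne
  have key : ∀ x, 0 < x → x < q → deriv (besselJ μ) x = 0 →
      ∀ y, x < y → y < q → deriv (besselJ μ) y ≠ 0 := by
    intro x hx hxq hx0 y hxy hyq
    have := pos_of_deriv_pos_at_zeros (F := fun z => -deriv (besselJ μ) z) hxy
      (fun z hz => (hasDerivAt_deriv_besselJ hμ.le (hx.trans_le hz.1)).fun_neg)
      (by simp [hx0]) fun z hz h0 => by
        have hz0 := hx.trans_le hz.1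
        have hzq := hz.2.trans_lt hyq
        rw [neg_eq_zero.1 h0]
        have hμz : μ < z := by
          by_contra h
          exact (deriv_besselJ_pos_of_le hμ hz0 (not_lt.1 h)
            fun w hw => hpos w ⟨hw.1, hw.2.trans hzq⟩).ne' (neg_eq_zero.1 h0)
        have h1 : 0 < 1 - μ ^ 2 / z ^ 2 := by
          rw [sub_pos, div_lt_one (by positivity)]
          exact pow_lt_pow_left₀ hμz hμ.le two_ne_zero
        calc 0 < (1 - μ ^ 2 / z ^ 2) * besselJ μ z := mul_pos h1 (hpos z ⟨hz0, hzq⟩)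
          _ = _ := by ring
    exact (neg_pos.1 this).ne
  obtain ⟨y, hy0, hyz⟩ := ((eventually_deriv_besselJ_pos hμ).and (Ioo_mem_nhdsGT hq)).exists
  obtain ⟨d, hd, hd0⟩ := intermediate_value_Ioo' hyz.2.le (fun z hz =>
    (hasDerivAt_deriv_besselJ hμ.le
      (hyz.1.trans_le hz.1)).continuousAt.continuousWithinAt) ⟨hneg, hy0⟩
  have hdp := hyz.1.trans hd.1
  refine ⟨d, ⟨hdp, hd.2⟩, hd0, fun z hz h0 => ?_⟩
  rcases lt_trichotomy z d with h | h | h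
  · exact absurd hd0 (key z hz.1 hz.2 h0 d h hd.2)
  · exact h
  · exact absurd h0 (key d hdp hd.2 hd0 z h hz.2)

end Bessel

lemma EnumPosZeros.le {f : ℝ → ℝ} {x y : ℕ → ℝ} (hx : EnumPosZeros f x) (hy : EnumPosZeros f y)
    (k : ℕ) : x (k + 1) ≤ y (k + 1) := by
  induction k with
  | zero =>
    obtain ⟨m, hm, h⟩ := hx.2.2 _ (hy.2.1 1 le_rfl).1 (hy.2.1 1 le_rfl).2
    simp only [zero_add]
    rw [← h]
    exact hx.1.monotoneOn self_mem_Ici hm hm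
  | succ k ih =>
    have h1 : 1 ≤ k + 1 + 1 := by lia
    obtain ⟨m, hm, h⟩ := hx.2.2 _ (hy.2.1 _ h1).1 (hy.2.1 _ h1).2
    have hlt : x (k + 1) < x m := by
      rw [h]
      exact ih.trans_lt (hy.1 (mem_Ici.2 (by lia)) (mem_Ici.2 h1) (by lia))
    have hkm : k + 1 < m := (hx.1.lt_iff_lt (mem_Ici.2 (by lia)) hm).1 hlt
    rw [← h]
    exact hx.1.monotoneOn (mem_Ici.2 h1) hm hkm

lemma EnumPosZeros.exists_gt {f : ℝ → ℝ} {x : ℕ → ℝ} (hx : EnumPosZeros f x)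
    (hf : ContinuousOn f (Ioi 0)) (z : ℝ) : ∃ k, z < x (k + 1) := by
  by_contra! h
  have hmono : StrictMono fun k => x (k + 1) :=
    fun a b hab => hx.1 (mem_Ici.2 (by lia)) (mem_Ici.2 (by lia)) (by lia)
  have hbdd : BddAbove (range fun k => x (k + 1)) := ⟨z, by rintro _ ⟨k, rfl⟩; exact h k⟩
  have hlim := tendsto_atTop_ciSup hmono.monotone hbdd
  set L := ⨆ k, x (k + 1)
  have hle : ∀ k, x (k + 1) ≤ L := fun k => le_ciSup hbdd k
  have hL : 0 < L := (hx.2.1 1 le_rfl).1.trans_le (hle 0)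
  have h0 : f L = 0 := by
    have h1 := (hf.continuousAt (Ioi_mem_nhds hL)).tendsto.comp hlim
    refine tendsto_nhds_unique h1 (tendsto_const_nhds.congr fun k => ?_)
    exact (hx.2.1 (k + 1) (by lia)).2.symm
  obtain ⟨m, hm, hmL⟩ := hx.2.2 L hL h0
  exact (hx.1 hm (mem_Ici.2 (by lia)) (Nat.lt_succ_self m)).not_ge (hmL ▸ hle m)

/-- If `f` has exactly one zero in each cell `(p k, p (k + 1))` of a partition and no other
positive zero, the enumeration of its positive zeros is given by these zeros. -/
lemma EnumPosZeros.eq_of_cells {f : ℝ → ℝ} {x p d : ℕ → ℝ} (hx : EnumPosZeros f x)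
    (hp : StrictMono p) (hp0 : 0 ≤ p 0) (hpu : ∀ z, ∃ k, z < p k)
    (hd : ∀ k, d k ∈ Ioo (p k) (p (k + 1))) (hd0 : ∀ k, f (d k) = 0)
    (hdu : ∀ k, ∀ z ∈ Ico (p k) (p (k + 1)), 0 < z → f z = 0 → z = d k)
    (hne : ∀ z ∈ Ioo 0 (p 0), f z ≠ 0) (k : ℕ) : x (k + 1) = d k := by
  have hdm : StrictMono d := strictMono_nat_of_lt_succ fun k => (hd k).2.trans (hd (k + 1)).1
  have hy : EnumPosZeros f fun k => d (k - 1) := by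
    refine ⟨fun a ha b hb hab => hdm ?_, fun k _ => ⟨?_, hd0 _⟩, fun z hz hz0 => ?_⟩
    · have : 1 ≤ a := ha
      lia
    · exact (hp0.trans (hp.monotone (Nat.zero_le _))).trans_lt (hd _).1
    · have hcell : ∃ k, z < p k := hpu z
      have hlt := Nat.find_spec hcell
      rcases hfind : Nat.find hcell with _ | n
      · rw [hfind] at hlt
        exact absurd hz0 (hne z ⟨hz, hlt⟩)
      · have hge : p n ≤ z := not_lt.1 (Nat.find_min hcell (by lia))
        rw [hfind] at hlt
        exact ⟨n + 1, by lia, (hdu n z ⟨hge, hlt⟩ hz hz0).symm⟩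
  exact le_antisymm (hx.le hy k) (hy.le hx k)

lemma EnumPosZeros.ne_zero_between {f : ℝ → ℝ} {x : ℕ → ℝ} (hx : EnumPosZeros f x) (k : ℕ) :
    ∀ z ∈ Ioo (x (k + 1)) (x (k + 2)), f z ≠ 0 := by
  intro z hz h0
  obtain ⟨m, hm, rfl⟩ := hx.2.2 z ((hx.2.1 (k + 1) (by lia)).1.trans hz.1) h0
  have h1 := (hx.1.lt_iff_lt (mem_Ici.2 (by lia)) hm).1 hz.1
  have h2 := (hx.1.lt_iff_lt hm (mem_Ici.2 (by lia))).1 hz.2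
  lia

lemma EnumPosZeros.ne_zero_before {f : ℝ → ℝ} {x : ℕ → ℝ} (hx : EnumPosZeros f x) :
    ∀ z ∈ Ioo 0 (x 1), f z ≠ 0 := by
  intro z hz h0
  obtain ⟨m, hm, rfl⟩ := hx.2.2 z hz.1 h0
  exact hz.2.not_ge (hx.1.monotoneOn self_mem_Ici hm hm)

/-- For `ν ≥ 1` and every `k ≥ 1`,
`j_{ν−1,k+1} < λ⁺_{ν−1,k+1} < j′_{ν−1,k+2} < j_{ν−1,k+2}`. -/
theorem stmt14 (ν : ℝ) (hν : 1 ≤ ν)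
    (j j' lam : ℕ → ℝ)
    (hj : EnumPosZeros (besselJ (ν - 1)) j)
    (hj' : EnumBesselDerivZeros (ν - 1) j')
    (hlam : EnumPosZeros (fun z => besselJ (ν - 1) z + besselJ ν z) lam)
    (k : ℕ) (hk : 1 ≤ k) :
    j (k + 1) < lam (k + 1) ∧ lam (k + 1) < j' (k + 2) ∧ j' (k + 2) < j (k + 2) := by
  obtain ⟨μ, rfl⟩ : ∃ μ, ν = μ + 1 := ⟨ν - 1, by ring⟩
  have hμ : 0 ≤ μ := by linarith
  rw [add_sub_cancel_right] at hj hj' hlam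
  have hne := hj.ne_zero_before
  have hj1 := hj.2.1 1 le_rfl
  have hjm : StrictMono fun k => j (k + 1) :=
    fun a b hab => hj.1 (mem_Ici.2 (by lia)) (mem_Ici.2 (by lia)) (by lia)
  have hju := hj.exists_gt (continuousOn_besselJ hμ)
  have hμj : ∀ k, μ ≤ j (k + 1) := fun k =>
    (lt_first_zero hμ hj1.1 hj1.2 hne).le.trans (hjm.monotone (Nat.zero_le k))
  choose c d hpc hcd hdq hc0 hd0 hcu hdu using fun k : ℕ =>
    exists_zeros_between hμ (hj.2.1 (k + 1) (by lia)).1 (hjm (Nat.lt_succ_self k)) (hμj k)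
      (hj.2.1 (k + 1) (by lia)).2 (hj.2.1 (k + 2) (by lia)).2 (hj.ne_zero_between k)
  have hlamc : lam (k + 1) = c k :=
    hlam.eq_of_cells hjm hj1.1.le hju (fun k => ⟨hpc k, (hcd k).trans (hdq k)⟩) hc0
      (fun k z hz _ => hcu k z (Ico_subset_Icc_self hz))
      (fun z hz => (besselJ_add_pos hμ hne z hz).ne') k
  have hjd : j' (k + 2) = d k := by
    rcases hμ.eq_or_lt with rfl | hpos
    · exact (hj'.2 rfl).2.eq_of_cells hjm hj1.1.le hju
        (fun k => ⟨(hpc k).trans (hcd k), hdq k⟩) hd0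
        (fun k z hz _ => hdu k z (Ico_subset_Icc_self hz))
        (fun z hz => (deriv_besselJ_zero_neg hne z hz).ne) k
    · obtain ⟨e, he, he0, heu⟩ := exists_deriv_zero_before hpos hj1.1 hj1.2 hne
      let p : ℕ → ℝ := fun n => Nat.casesOn n 0 fun n => j (n + 1)
      let d' : ℕ → ℝ := fun n => Nat.casesOn n e d
      refine (hj'.1 hpos.ne').eq_of_cells (p := p) (d := d')
        (strictMono_nat_of_lt_succ ?_) le_rfl (fun z => ?_) ?_ ?_ ?_ (fun z hz => ?_) (k + 1)
      · rintro (_ | n)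
        exacts [hj1.1, hjm (Nat.lt_succ_self n)]
      · obtain ⟨n, hn⟩ := hju z
        exact ⟨n + 1, hn⟩
      · rintro (_ | n)
        exacts [he, ⟨(hpc n).trans (hcd n), hdq n⟩]
      · rintro (_ | n)
        exacts [he0, hd0 n]
      · rintro (_ | n) z hz hz0
        exacts [heu z ⟨hz0, hz.2⟩, hdu n z (Ico_subset_Icc_self hz)]
      · exact absurd hz.2 hz.1.not_gt
  rw [hlamc, hjd]
  exact ⟨hpc k, hcd k, hdq k⟩
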